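/- Let k be a field and for m ≥ 1 consider the k-algebra H_{1,m} = k[s,y₁,...,y_m]/(C₁,...,C_{m+1}) where the C_i are the coefficients of x^{m+1-i} in (x - s)(x^m + y₁x^{m-1} + ... + y_m). Then H_{1,m} is isomorphic as a k-algebra to k[u]/(u^{m+1}). -/

import Mathlib

open MvPolynomial

/-- `Yv k m i` is the variable `yᵢ` (for `1 ≤ i ≤ m`), with the convention `y₀ = 1`,
in the polynomial ring `k[s, y₁, …, y_m]` where `s` is the variable of index `0`. -/
noncomputable def Yv (k : Type*) [Field k] (m : ℕ) (i : ℕ) : MvPolynomial (Fin (m + 1)) k :=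
  if i = 0 then 1 else if h : i ≤ m then X ⟨i, Nat.lt_succ_of_le h⟩ else 0

theorem stmt12 (k : Type*) [Field k] (m : ℕ) (hm : 1 ≤ m) :
    Nonempty ((MvPolynomial (Fin (m + 1)) k ⧸
        Ideal.span {p : MvPolynomial (Fin (m + 1)) k |
          (∃ i, 1 ≤ i ∧ i ≤ m ∧ p = Yv k m i - X 0 * Yv k m (i - 1)) ∨
          p = -(X 0 * Yv k m m)}) ≃ₐ[k]
      (Polynomial k ⧸ Ideal.span {(Polynomial.X : Polynomial k) ^ (m + 1)})) := by
  set I := Ideal.span {p : MvPolynomial (Fin (m + 1)) k |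
          (∃ i, 1 ≤ i ∧ i ≤ m ∧ p = Yv k m i - X 0 * Yv k m (i - 1)) ∨
          p = -(X 0 * Yv k m m)} with hI
  set J := Ideal.span {(Polynomial.X : Polynomial k) ^ (m + 1)} with hJ
  let u : Polynomial k ⧸ J := Ideal.Quotient.mkₐ k J Polynomial.X
  have hu : u ^ (m + 1) = 0 := by
    change (Ideal.Quotient.mkₐ k J Polynomial.X) ^ (m + 1) = 0
    rw [← map_pow]
    exact Ideal.Quotient.eq_zero_iff_mem.mpr (Ideal.subset_span rfl)
  let F : MvPolynomial (Fin (m + 1)) k →ₐ[k] Polynomial k ⧸ J :=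
    aeval (fun j : Fin (m + 1) => if j = 0 then u else u ^ (j : ℕ))
  have hF0 : F (X 0) = u := by simp [F]
  have hFY : ∀ i, i ≤ m → F (Yv k m i) = u ^ i := by
    intro i hi
    unfold Yv
    by_cases h0 : i = 0
    · simp [h0]
    · rw [if_neg h0, dif_pos hi]
      have hne : (⟨i, Nat.lt_succ_of_le hi⟩ : Fin (m + 1)) ≠ 0 :=
        fun h => h0 (congrArg Fin.val h)
      exact (aeval_X _ _).trans (if_neg hne)
  have hF : ∀ a ∈ I, F a = 0 := by
    intro a ha
    have hle : I ≤ RingHom.ker F := by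
      rw [hI, Ideal.span_le]
      rintro p (⟨i, h1, h2, rfl⟩ | rfl)
      · obtain ⟨j, rfl⟩ := Nat.exists_eq_add_of_le' h1
        simp only [SetLike.mem_coe, RingHom.mem_ker, map_sub, map_mul, hF0]
        rw [hFY _ h2, hFY _ (by omega), Nat.add_sub_cancel, pow_succ']
        exact sub_self _
      · simp only [SetLike.mem_coe, RingHom.mem_ker, map_neg, map_mul, hF0]
        rw [hFY _ le_rfl, ← pow_succ', hu, neg_zero]
    exact hle ha
  let q := Ideal.Quotient.mkₐ k I
  let s : MvPolynomial (Fin (m + 1)) k ⧸ I := q (X 0)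
  have hY0 : Yv k m 0 = 1 := by simp [Yv]
  have hqY : ∀ i, i ≤ m → q (Yv k m i) = s ^ i := by
    intro i
    induction i with
    | zero => intro _; rw [hY0, map_one, pow_zero]
    | succ j ih =>
      intro hj
      have h : q (Yv k m (j + 1) - X 0 * Yv k m j) = 0 :=
        Ideal.Quotient.eq_zero_iff_mem.mpr
          (Ideal.subset_span (Or.inl ⟨j + 1, by omega, hj, rfl⟩))
      rw [map_sub, map_mul, ih (by omega), sub_eq_zero] at h
      rw [h, pow_succ']
  have hs : s ^ (m + 1) = 0 := by
    have h : q (-(X 0 * Yv k m m)) = 0 :=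
      Ideal.Quotient.eq_zero_iff_mem.mpr (Ideal.subset_span (Or.inr rfl))
    rw [map_neg, map_mul, hqY m le_rfl, neg_eq_zero] at h
    rw [pow_succ']; exact h
  let G : Polynomial k →ₐ[k] MvPolynomial (Fin (m + 1)) k ⧸ I := Polynomial.aeval s
  have hG0 : G Polynomial.X = s := by simp [G]
  have hG : ∀ a ∈ J, G a = 0 := by
    intro a ha
    obtain ⟨b, rfl⟩ := Ideal.mem_span_singleton.mp ha
    rw [map_mul, map_pow, hG0, hs, zero_mul]
  let F' := Ideal.Quotient.liftₐ I F hF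
  let G' := Ideal.Quotient.liftₐ J G hG
  have hF' : ∀ a, F' (q a) = F a := fun a => rfl
  have hG' : ∀ a, G' (Ideal.Quotient.mkₐ k J a) = G a := fun a => rfl
  have hGu : G' u = s := (hG' _).trans hG0
  refine ⟨AlgEquiv.ofAlgHom F' G' ?_ ?_⟩
  · apply Ideal.Quotient.algHom_ext
    apply Polynomial.algHom_ext
    change F' (G' u) = u
    rw [hGu]
    exact (hF' _).trans hF0
  · apply Ideal.Quotient.algHom_ext
    apply MvPolynomial.algHom_ext
    intro j
    change G' (F' (q (X j))) = q (X j)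
    by_cases h0 : j = 0
    · subst h0
      rw [hF', hF0, hGu]
    · have hj : (j : ℕ) ≤ m := by omega
      have hX : X j = Yv k m j := by
        have : (j : ℕ) ≠ 0 := fun h => h0 (Fin.ext h)
        rw [Yv, if_neg this, dif_pos hj]
      rw [hX, hF', hFY _ hj, map_pow, hGu, hqY _ hj]
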